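/- Let n > 1 with n ≡ 1 (mod 4), and let S be an n×n real matrix that is skew-symmetric, has zero diagonal, and has all off-diagonal entries equal to ±1 (the Seidel adjacency matrix of an n-tournament). Then the number of diamonds, i.e., the number of 4-element subsets s of {1,…,n} for which the 4×4 principal submatrix of S indexed by s has determinant 9, is strictly less than n(n−1)(n−3)(n+1)/96. -/

import Mathlib

open Matrix

noncomputable section

/-- The number of diamonds of the tournament with Seidel adjacency matrix `S`: the number
of 4-element index subsets whose principal submatrix of `S` has determinant 9. -/
noncomputable def diamondCount {n : ℕ} (S : Matrix (Fin n) (Fin n) ℝ) : ℕ :=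
  Set.ncard {s : Finset (Fin n) | s.card = 4 ∧
    (S.submatrix (fun i : s => (i : Fin n)) (fun j : s => (j : Fin n))).det = 9}

theorem aux_sum_inside {n : ℕ} (f : Fin n → ℤ) (t : Finset (Fin n))
    (h : ∀ l, l ∉ t → (4 : ℤ) ∣ f l) : (4 : ℤ) ∣ (∑ l, f l) - ∑ l ∈ t, f l := by
  rw [← Finset.sum_add_sum_compl t f, add_sub_cancel_left]
  exact Finset.dvd_sum fun l hl => h l (by simpa using hl)

theorem aux_row_sq {n : ℕ} (Z : Fin n → Fin n → ℤ)
    (hd : ∀ i, Z i i = 0) (ho : ∀ i j, i ≠ j → Z i j = 1 ∨ Z i j = -1) (i : Fin n) :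
    ∑ k, Z i k * Z i k = (n : ℤ) - 1 := by
  have : ∀ k, Z i k * Z i k = 1 - if k = i then 1 else 0 := by
    intro k
    by_cases h : k = i
    · subst h; simp [hd]
    · rcases ho i k (Ne.symm h) with h1 | h1 <;> simp [h1, h]
  simp [this]

theorem aux_odd {n : ℕ} (hmod : n % 4 = 1) (Z : Fin n → Fin n → ℤ)
    (hs : ∀ i j, Z j i = - Z i j)
    (hd : ∀ i, Z i i = 0) (ho : ∀ i j, i ≠ j → Z i j = 1 ∨ Z i j = -1) (i j : Fin n)
    (hij : i ≠ j) : (∑ k, Z i k * Z j k) % 2 = 1 := by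
  have h := aux_sum_inside (fun l => (Z i l + Z j l) * (Z i l + Z j l)) {i, j} (by
    intro l hl
    simp only [Finset.mem_insert, Finset.mem_singleton, not_or] at hl
    rcases ho i l (Ne.symm hl.1) with h1 | h1 <;> rcases ho j l (Ne.symm hl.2) with h2 | h2 <;>
      simp [h1, h2])
  have e : ∑ l, (Z i l + Z j l) * (Z i l + Z j l)
      = 2 * ((n : ℤ) - 1) + 2 * ∑ k, Z i k * Z j k := by
    have e1 : ∀ l, (Z i l + Z j l) * (Z i l + Z j l)
      = Z i l * Z i l + Z j l * Z j l + 2 * (Z i l * Z j l) := fun l => by ring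
    simp only [e1, Finset.sum_add_distrib, ← Finset.mul_sum, aux_row_sq Z hd ho]
    ring
  rw [e, Finset.sum_pair hij] at h
  simp only [hd, hs i j] at h
  rcases ho i j hij with h1 | h1 <;> rw [h1] at h <;> omega

theorem aux_triple {n : ℕ} (hmod : n % 4 = 1) (Z : Fin n → Fin n → ℤ)
    (hs : ∀ i j, Z j i = - Z i j)
    (hd : ∀ i, Z i i = 0) (ho : ∀ i j, i ≠ j → Z i j = 1 ∨ Z i j = -1) (i j k : Fin n)
    (hij : i ≠ j) (hik : i ≠ k) (hjk : j ≠ k) :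
    ((∑ l, Z i l * Z j l) + (∑ l, Z i l * Z k l) + (∑ l, Z j l * Z k l)) % 4 = 3 := by
  have h := aux_sum_inside (fun l => (Z i l + Z j l) * (Z i l + Z k l)) {i, j, k} (by
    intro l hl
    simp only [Finset.mem_insert, Finset.mem_singleton, not_or] at hl
    rcases ho i l (Ne.symm hl.1) with h1 | h1 <;> rcases ho j l (Ne.symm hl.2.1) with h2 | h2 <;>
      rcases ho k l (Ne.symm hl.2.2) with h3 | h3 <;> simp [h1, h2, h3])
  have e : ∑ l, (Z i l + Z j l) * (Z i l + Z k l)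
      = ((n : ℤ) - 1) + ((∑ l, Z i l * Z j l) + (∑ l, Z i l * Z k l) + (∑ l, Z j l * Z k l)) := by
    have e1 : ∀ l, (Z i l + Z j l) * (Z i l + Z k l)
      = Z i l * Z i l + (Z i l * Z j l + Z i l * Z k l + Z j l * Z k l) := fun l => by ring
    simp only [e1, Finset.sum_add_distrib, aux_row_sq Z hd ho]
  rw [e, Finset.sum_insert (by simp [hij, hik]), Finset.sum_pair hjk] at h
  simp only [hd, hs i j, hs i k, hs j k] at h
  rcases ho i j hij with h1 | h1 <;> rcases ho i k hik with h2 | h2 <;>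
    rcases ho j k hjk with h3 | h3 <;> rw [h1, h2, h3] at h <;> norm_num at h <;> omega

theorem aux_exists {n : ℕ} (hn : 1 < n) (hmod : n % 4 = 1) (Z : Fin n → Fin n → ℤ)
    (hs : ∀ i j, Z j i = - Z i j)
    (hd : ∀ i, Z i i = 0) (ho : ∀ i j, i ≠ j → Z i j = 1 ∨ Z i j = -1) :
    ∃ i j, i ≠ j ∧ 1 < (∑ k, Z i k * Z j k) ^ 2 := by
  by_contra! hcon
  set A : Fin n → Fin n → ℤ := fun i j => ∑ k, Z i k * Z j k with hA
  have hsymm : ∀ i j, A i j = A j i := fun i j => by simp [hA, mul_comm]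
  have hpm : ∀ i j, i ≠ j → A i j = 1 ∨ A i j = -1 := by
    intro i j hij
    have h1 : A i j ^ 2 ≤ 1 := hcon i j hij
    have h2 : A i j % 2 = 1 := aux_odd hmod Z hs hd ho i j hij
    have h3 : -1 ≤ A i j := by nlinarith
    have h4 : A i j ≤ 1 := by nlinarith
    omega
  let z : Fin n := ⟨0, by omega⟩
  let v : Fin n → ℤ := fun i => if i = z then 1 else A i z
  have hv : ∀ i, v i * v i = 1 := by
    intro i
    by_cases h : i = z
    · simp [v, h]
    · rcases hpm i z h with h1 | h1 <;> simp [v, h, h1]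
  have hAv : ∀ i j, A i j = v i * v j + if i = j then (n : ℤ) - 2 else 0 := by
    intro i j
    by_cases hij : i = j
    · subst hij
      have : A i i = n - 1 := aux_row_sq Z hd ho i
      simp [hv, this]; ring
    · by_cases hi : i = z
      · have hj : j ≠ z := fun h => hij (hi.trans h.symm)
        simp [hij, v, hi, hj, hsymm z j, Ne.symm hj]
      · by_cases hj : j = z
        · simp [v, hi, hj]
        · have := aux_triple hmod Z hs hd ho i j z hij hi hj
          change (A i j + A i z + A j z) % 4 = 3 at this
          rcases hpm i j hij with h1 | h1 <;> rcases hpm i z hi with h2 | h2 <;>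
            rcases hpm j z hj with h3 | h3 <;> simp [v, hij, hi, hj, h1, h2, h3] at this ⊢
  -- determinant vanishes
  let M : Matrix (Fin n) (Fin n) ℤ := Matrix.of Z
  have hMT : Mᵀ = -M := by ext i j; simp [M, hs i j]
  have hdet : M.det = 0 := by
    have h1 : M.det = (-1) ^ n * M.det := by
      conv_lhs => rw [← Matrix.det_transpose, hMT, Matrix.det_neg]
      simp
    rw [Odd.neg_one_pow (Nat.odd_iff.2 (by omega))] at h1
    omega
  obtain ⟨x, hx0, hx⟩ := Matrix.exists_vecMul_eq_zero_iff.2 hdet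
  have hxs : ∀ k, ∑ i, x i * Z i k = 0 := fun k => by
    have := congrFun hx k
    simpa [Matrix.vecMul, dotProduct, M] using this
  have q1 : ∑ i, ∑ j, x i * x j * A i j = 0 := by
    have : ∑ i, ∑ j, x i * x j * A i j = ∑ k, (∑ i, x i * Z i k) * (∑ j, x j * Z j k) := by
      simp only [hA, Finset.mul_sum, Finset.sum_mul]
      rw [Finset.sum_comm' (t' := Finset.univ) (s' := fun _ => Finset.univ) (by simp)]
      conv_rhs => rw [Finset.sum_comm]
      refine Finset.sum_congr rfl fun i _ => ?_
      rw [Finset.sum_comm]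
      refine Finset.sum_congr rfl fun k _ => Finset.sum_congr rfl fun j _ => ?_
      ring
    rw [this]; simp [hxs]
  have q2 : ∑ i, ∑ j, x i * x j * A i j = (∑ i, x i * v i) ^ 2 + ((n : ℤ) - 2) * ∑ i, x i ^ 2 := by
    rw [sq (∑ i, x i * v i), Finset.sum_mul_sum, Finset.mul_sum]
    simp only [hAv, mul_add, Finset.sum_add_distrib]
    congr 1
    · exact Finset.sum_congr rfl fun i _ => Finset.sum_congr rfl fun j _ => by ring
    · refine Finset.sum_congr rfl fun i _ => ?_
      simp; ring
  have q3 : 0 < ∑ i, x i ^ 2 := by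
    obtain ⟨i, hi⟩ := Function.ne_iff.1 hx0
    exact Finset.sum_pos' (fun _ _ => sq_nonneg _) ⟨i, Finset.mem_univ _, by
      have : x i ≠ 0 := hi
      positivity⟩
  have hn5 : (5 : ℤ) ≤ n := by omega
  nlinarith [sq_nonneg (∑ i, x i * v i)]

theorem aux_trace_int {n : ℕ} (hn : 1 < n) (hmod : n % 4 = 1) (Z : Fin n → Fin n → ℤ)
    (hs : ∀ i j, Z j i = - Z i j)
    (hd : ∀ i, Z i i = 0) (ho : ∀ i j, i ≠ j → Z i j = 1 ∨ Z i j = -1) :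
    (n : ℤ) ^ 2 * (n - 1) < ∑ i, ∑ j, (∑ k, Z i k * Z j k) ^ 2 := by
  have hle : ∀ i j, (1 + if i = j then ((n : ℤ) - 1) ^ 2 - 1 else 0)
      ≤ (∑ k, Z i k * Z j k) ^ 2 := by
    intro i j
    by_cases hij : i = j
    · subst hij; rw [aux_row_sq Z hd ho]; simp
    · have h2 := aux_odd hmod Z hs hd ho i j hij
      have : (∑ k, Z i k * Z j k) ≠ 0 := fun h => by rw [h] at h2; omega
      simp only [hij, if_false, add_zero]
      have := sq_pos_of_ne_zero this
      omega
  obtain ⟨a, b, hab, h⟩ := aux_exists hn hmod Z hs hd ho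
  calc (n : ℤ) ^ 2 * (n - 1)
      = ∑ i : Fin n, ∑ j : Fin n, (1 + if i = j then ((n : ℤ) - 1) ^ 2 - 1 else 0) := by
        simp [Finset.sum_add_distrib]; ring
    _ < _ := by
        refine Finset.sum_lt_sum (fun i _ => Finset.sum_le_sum fun j _ => hle i j)
          ⟨a, Finset.mem_univ _, Finset.sum_lt_sum (fun j _ => hle a j) ⟨b, Finset.mem_univ _, ?_⟩⟩
        simpa [hab] using h

theorem aux_trace {n : ℕ} (hn : 1 < n) (hmod : n % 4 = 1)
    (S : Matrix (Fin n) (Fin n) ℝ)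
    (hs : ∀ i j, S j i = - S i j) (hd : ∀ i, S i i = 0)
    (ho : ∀ i j, i ≠ j → S i j = 1 ∨ S i j = -1) :
    (n : ℝ) ^ 2 * (n - 1) < ∑ i, ∑ j, (∑ k, S i k * S j k) ^ 2 := by
  have hZ : ∀ i j, ∃ z : ℤ, (z : ℝ) = S i j := by
    intro i j
    by_cases hij : i = j
    · exact ⟨0, by simp [hij, hd]⟩
    · rcases ho i j hij with h | h
      · exact ⟨1, by simp [h]⟩
      · exact ⟨-1, by simp [h]⟩
  choose Z hZ using hZ
  have := aux_trace_int hn hmod Z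
    (fun i j => by have := hs i j; rw [← hZ, ← hZ] at this; exact_mod_cast this)
    (fun i => by have := hd i; rw [← hZ] at this; exact_mod_cast this)
    (fun i j h => by have := ho i j h; rw [← hZ] at this; exact_mod_cast this)
  simp only [← hZ]
  exact_mod_cast this

theorem aux_det4 {n : ℕ} (S : Matrix (Fin n) (Fin n) ℝ)
    (hs : ∀ i j, S j i = - S i j) (hd : ∀ i, S i i = 0) (t : Fin 4 → Fin n) :
    (S.submatrix t t).det = (S (t 0) (t 1) * S (t 2) (t 3) - S (t 0) (t 2) * S (t 1) (t 3)
      + S (t 0) (t 3) * S (t 1) (t 2)) ^ 2 := by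
  simp [Matrix.det_succ_row_zero, Fin.sum_univ_succ, Fin.succAbove, hd]
  rw [hs (t 0) (t 1), hs (t 0) (t 2), hs (t 0) (t 3), hs (t 1) (t 2), hs (t 1) (t 3),
    hs (t 2) (t 3)]
  ring

theorem aux_sum_det {n : ℕ} (S : Matrix (Fin n) (Fin n) ℝ)
    (hs : ∀ i j, S j i = - S i j) (hd : ∀ i, S i i = 0)
    (ho : ∀ i j, i ≠ j → S i j = 1 ∨ S i j = -1) :
    ∑ t : Fin 4 → Fin n, (S.submatrix t t).det
      = 3 * ((n : ℝ) * (n - 1)) ^ 2 - 6 * ∑ i, ∑ j, (∑ k, S i k * S j k) ^ 2 := by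
  have hrow : ∀ i, ∑ k, S i k ^ 2 = (n : ℝ) - 1 := by
    intro i
    have : ∀ k, S i k ^ 2 = 1 - if k = i then 1 else 0 := by
      intro k
      by_cases h : k = i
      · subst h; simp [hd]
      · rcases ho i k (Ne.symm h) with h1 | h1 <;> simp [h1, h]
    simp [this]
  have hT : ∑ i, ∑ j, (∑ k, S i k * S j k) ^ 2
      = ∑ a, ∑ b, ∑ c, ∑ d, S a c * S b c * (S a d * S b d) := by
    refine Finset.sum_congr rfl fun a _ => Finset.sum_congr rfl fun b _ => ?_
    rw [sq, Finset.sum_mul_sum]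
  have hconv : ∀ F : Fin n → Fin n → Fin n → Fin n → ℝ,
      ∑ t : Fin 4 → Fin n, F (t 0) (t 1) (t 2) (t 3) = ∑ a, ∑ b, ∑ c, ∑ d, F a b c d := by
    intro F
    rw [← (Fin.consEquiv (fun _ : Fin 4 => Fin n)).sum_comp, Fintype.sum_prod_type]
    refine Finset.sum_congr rfl fun a _ => ?_
    rw [← (Fin.consEquiv (fun _ : Fin 3 => Fin n)).sum_comp, Fintype.sum_prod_type]
    refine Finset.sum_congr rfl fun b _ => ?_
    rw [← (Fin.consEquiv (fun _ : Fin 2 => Fin n)).sum_comp, Fintype.sum_prod_type]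
    refine Finset.sum_congr rfl fun c _ => ?_
    rw [← (Equiv.funUnique (Fin 1) (Fin n)).symm.sum_comp]
    refine Finset.sum_congr rfl fun d _ => ?_
    rfl
  simp only [aux_det4 S hs hd]
  rw [hconv (fun a b c d => (S a b * S c d - S a c * S b d + S a d * S b c) ^ 2)]
  have hexp : ∀ a b c d, (S a b * S c d - S a c * S b d + S a d * S b c) ^ 2
      = S a b ^ 2 * S c d ^ 2 + S a c ^ 2 * S b d ^ 2 + S a d ^ 2 * S b c ^ 2
        - 2 * (S a b * S d b * (S a c * S d c)) - 2 * (S a b * S c b * (S a d * S c d))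
        - 2 * (S a c * S b c * (S a d * S b d)) := by
    intro a b c d
    rw [hs b d, hs c d, hs b c]; ring
  simp only [hexp, Finset.sum_add_distrib, Finset.sum_sub_distrib, ← Finset.mul_sum]
  have s1 : ∑ a, ∑ b, ∑ c, ∑ d, S a b ^ 2 * S c d ^ 2 = ((n : ℝ) * (n - 1)) ^ 2 := by
    simp only [← Finset.mul_sum, hrow, ← Finset.sum_mul]
    simp; ring
  have s2 : ∑ a, ∑ b, ∑ c, ∑ d, S a c ^ 2 * S b d ^ 2 = ((n : ℝ) * (n - 1)) ^ 2 := by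
    simp only [← Finset.mul_sum, hrow, ← Finset.sum_mul]
    simp; ring
  have s3 : ∑ a, ∑ b, ∑ c, ∑ d, S a d ^ 2 * S b c ^ 2 = ((n : ℝ) * (n - 1)) ^ 2 := by
    simp only [← Finset.mul_sum, hrow, ← Finset.sum_mul]
    simp; ring
  have c1 : ∑ a, ∑ b, ∑ c, ∑ d, S a b * S d b * (S a c * S d c)
      = ∑ a, ∑ b, ∑ c, ∑ d, S a c * S b c * (S a d * S b d) := by
    refine Finset.sum_congr rfl fun a _ => ?_
    rw [Finset.sum_congr rfl fun b _ => Finset.sum_comm]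
    rw [Finset.sum_comm]
  have c2 : ∑ a, ∑ b, ∑ c, ∑ d, S a b * S c b * (S a d * S c d)
      = ∑ a, ∑ b, ∑ c, ∑ d, S a c * S b c * (S a d * S b d) := by
    refine Finset.sum_congr rfl fun a _ => ?_
    rw [Finset.sum_comm]
  simp only [← Finset.mul_sum] at s1 s2 s3 c1 c2 hT ⊢
  rw [s1, s2, s3, c1, c2, hT]
  ring

theorem aux_fiber {n : ℕ} (s : Finset (Fin n)) (hs : s.card = 4) :
    (Finset.univ.filter fun t : Fin 4 → Fin n =>
      Finset.univ.image t = s).card = 24 := by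
  have e : Fin 4 ≃ s := (Finset.equivFinOfCardEq hs).symm
  have h24 : Fintype.card (Fin 4 ≃ s) = 24 := by
    rw [Fintype.card_equiv e]; rfl
  rw [← h24, ← Finset.card_univ]
  symm
  refine Finset.card_bij (fun f _ i => (f i : Fin n)) ?_ ?_ ?_
  · intro f _
    simp only [Finset.mem_filter, Finset.mem_univ, true_and]
    ext x
    simp only [Finset.mem_image, Finset.mem_univ, true_and]
    constructor
    · rintro ⟨i, rfl⟩; exact (f i).2
    · intro hx; exact ⟨f.symm ⟨x, hx⟩, by simp⟩
  · intro f _ g _ h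
    ext i
    exact congrArg Fin.val (congrFun h i)
  · intro t ht
    simp only [Finset.mem_filter, Finset.mem_univ, true_and] at ht
    have hm : ∀ i, t i ∈ s := fun i => by rw [← ht]; simp
    refine ⟨Equiv.ofBijective (fun i => (⟨t i, hm i⟩ : s)) ?_, Finset.mem_univ _, rfl⟩
    rw [Fintype.bijective_iff_surjective_and_card]
    refine ⟨?_, by simp [hs]⟩
    rintro ⟨x, hx⟩
    rw [← ht] at hx
    obtain ⟨i, _, hi⟩ := Finset.mem_image.1 hx
    exact ⟨i, by simp [hi]⟩

theorem aux_det_fiber {n : ℕ} (S : Matrix (Fin n) (Fin n) ℝ) (s : Finset (Fin n))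
    (hs : s.card = 4) (t : Fin 4 → Fin n) (ht : Finset.univ.image t = s) :
    (S.submatrix (fun i : s => (i : Fin n)) (fun j : s => (j : Fin n))).det
      = (S.submatrix t t).det := by
  have hm : ∀ i, t i ∈ s := fun i => by rw [← ht]; simp
  let e : Fin 4 ≃ s := Equiv.ofBijective (fun i => (⟨t i, hm i⟩ : s)) (by
    rw [Fintype.bijective_iff_surjective_and_card]
    refine ⟨?_, by simp [hs]⟩
    rintro ⟨x, hx⟩
    rw [← ht] at hx
    obtain ⟨i, _, hi⟩ := Finset.mem_image.1 hx
    exact ⟨i, by simp [hi]⟩)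
  rw [← Matrix.det_submatrix_equiv_self e]
  rfl

theorem aux_sum_subsets {n : ℕ} (S : Matrix (Fin n) (Fin n) ℝ) :
    ∑ t : Fin 4 → Fin n, (S.submatrix t t).det
      = 24 * ∑ s ∈ Finset.powersetCard 4 (Finset.univ : Finset (Fin n)),
        (S.submatrix (fun i : s => (i : Fin n)) (fun j : s => (j : Fin n))).det := by
  have h0 : ∑ t : Fin 4 → Fin n, (S.submatrix t t).det
      = ∑ t ∈ Finset.univ.filter (fun t : Fin 4 → Fin n => (Finset.univ.image t).card = 4),
        (S.submatrix t t).det := by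
    symm
    refine Finset.sum_subset (Finset.subset_univ _) ?_
    intro t _ ht
    have hni : ¬ Function.Injective t := by
      intro hi
      apply ht
      simp [Finset.card_image_of_injective _ hi]
    simp only [Function.Injective, not_forall] at hni
    obtain ⟨i, j, h, hij⟩ := hni
    exact Matrix.det_zero_of_row_eq hij (by ext k; simp [h])
  rw [h0, ← Finset.sum_fiberwise_of_maps_to
    (t := Finset.powersetCard 4 (Finset.univ : Finset (Fin n)))
    (g := fun t => Finset.univ.image t) (by
      intro t ht
      simpa [Finset.mem_powersetCard] using ht), Finset.mul_sum]
  refine Finset.sum_congr rfl fun s hs => ?_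
  have hs4 : s.card = 4 := (Finset.mem_powersetCard.1 hs).2
  have hf : (Finset.univ.filter (fun t : Fin 4 → Fin n => (Finset.univ.image t).card = 4)).filter
      (fun t => Finset.univ.image t = s)
      = Finset.univ.filter fun t : Fin 4 → Fin n => Finset.univ.image t = s := by
    ext t
    simp only [Finset.mem_filter, Finset.mem_univ, true_and, and_iff_right_iff_imp]
    intro h; rw [h, hs4]
  rw [hf, Finset.sum_congr rfl (g := fun _ =>
    (S.submatrix (fun i : s => (i : Fin n)) (fun j : s => (j : Fin n))).det),
    Finset.sum_const, aux_fiber s hs4]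
  · simp
  · intro t ht
    exact (aux_det_fiber S s hs4 t (Finset.mem_filter.1 ht).2).symm

theorem aux_one_le {n : ℕ} (S : Matrix (Fin n) (Fin n) ℝ)
    (hs : ∀ i j, S j i = - S i j) (hd : ∀ i, S i i = 0)
    (ho : ∀ i j, i ≠ j → S i j = 1 ∨ S i j = -1) (s : Finset (Fin n)) (h4 : s.card = 4) :
    1 ≤ (S.submatrix (fun i : s => (i : Fin n)) (fun j : s => (j : Fin n))).det := by
  have hne : (Finset.univ.filter fun t : Fin 4 → Fin n => Finset.univ.image t = s).Nonempty := by
    rw [← Finset.card_pos, aux_fiber s h4]; norm_num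
  obtain ⟨t, ht⟩ := hne
  have ht := (Finset.mem_filter.1 ht).2
  have hi : Function.Injective t := by
    have hc : (Finset.univ.image t).card = (Finset.univ : Finset (Fin 4)).card := by
      rw [ht, h4]; rfl
    have := Finset.card_image_iff.1 hc
    simpa using this
  rw [aux_det_fiber S s h4 t ht, aux_det4 S hs hd]
  have hh : ∀ i j : Fin 4, i ≠ j → S (t i) (t j) = 1 ∨ S (t i) (t j) = -1 :=
    fun i j h => ho _ _ (fun h' => h (hi h'))
  rcases hh 0 1 (by decide) with h1 | h1 <;> rcases hh 0 2 (by decide) with h2 | h2 <;>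
    rcases hh 0 3 (by decide) with h3 | h3 <;> rcases hh 1 2 (by decide) with h5 | h5 <;>
    rcases hh 1 3 (by decide) with h6 | h6 <;> rcases hh 2 3 (by decide) with h7 | h7 <;>
    rw [h1, h2, h3, h5, h6, h7] <;> norm_num

theorem aux_choose (n : ℕ) : (24 : ℝ) * (n.choose 4 : ℝ) =
    (n : ℝ) * (n - 1) * (n - 2) * (n - 3) := by
  induction n with
  | zero => simp
  | succ k ih =>
    have h3 : (6 : ℝ) * (k.choose 3 : ℝ) = (k : ℝ) * (k - 1) * (k - 2) := by
      clear ih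
      induction k with
      | zero => simp
      | succ m ihm =>
        have h2 := Nat.cast_choose_two ℝ m
        rw [Nat.choose_succ_succ' m 2]
        push_cast
        linear_combination ihm + 6 * h2
    rw [Nat.choose_succ_succ' k 3]
    push_cast
    linear_combination ih + 4 * h3

/-- a tournament on `n ≡ 1 (mod 4)` vertices (`n > 1`) has strictly fewer
than `n(n-1)(n-3)(n+1)/96` diamonds. -/
theorem diamond_count_lt_of_one_mod_four (n : ℕ) (hn : 1 < n) (hmod : n % 4 = 1)
    (S : Matrix (Fin n) (Fin n) ℝ)
    (hskew : Sᵀ = -S) (hdiag : ∀ i, S i i = 0)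
    (hoff : ∀ i j, i ≠ j → S i j = 1 ∨ S i j = -1) :
    (diamondCount S : ℝ) <
      (n : ℝ) * ((n : ℝ) - 1) * ((n : ℝ) - 3) * ((n : ℝ) + 1) / 96 := by
  classical
  have hs : ∀ i j, S j i = - S i j := fun i j => by
    simpa using congrFun (congrFun hskew i) j
  have hT := aux_trace hn hmod S hs hdiag hoff
  have h1 := aux_sum_det S hs hdiag hoff
  rw [aux_sum_subsets] at h1
  have hcount : diamondCount S = ((Finset.powersetCard 4 (Finset.univ : Finset (Fin n))).filter
      fun s : Finset (Fin n) => (S.submatrix (fun i : s => (i : Fin n)) (fun j : s => (j : Fin n))).det = 9).card := by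
    rw [diamondCount, ← Set.ncard_coe_finset]
    congr 1
    ext s
    simp [Finset.mem_powersetCard]
  have h2 : (n.choose 4 : ℝ) + 8 * (diamondCount S : ℝ)
      ≤ ∑ s ∈ Finset.powersetCard 4 (Finset.univ : Finset (Fin n)),
        (S.submatrix (fun i : s => (i : Fin n)) (fun j : s => (j : Fin n))).det := by
    have : (n.choose 4 : ℝ) + 8 * (diamondCount S : ℝ)
      = ∑ s ∈ Finset.powersetCard 4 (Finset.univ : Finset (Fin n)),
        (1 + 8 * if (S.submatrix (fun i : s => (i : Fin n))
          (fun j : s => (j : Fin n))).det = 9 then (1 : ℝ) else 0) := by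
      rw [Finset.sum_add_distrib, ← Finset.mul_sum, Finset.sum_boole, hcount]
      simp
    rw [this]
    refine Finset.sum_le_sum fun s hs' => ?_
    have h4 : s.card = 4 := (Finset.mem_powersetCard.1 hs').2
    have := aux_one_le S hs hdiag hoff s h4
    split_ifs with h
    · rw [h]; norm_num
    · simpa using this
  have h3 := aux_choose n
  rw [lt_div_iff₀ (by norm_num)]
  nlinarith

end
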